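/- Let R be a commutative ring whose projective modules are locally free (e.g. R noetherian), A a locally free R-module, and 0 → I → P → A → 0 an exact sequence of R-modules with P free. Then I is a locally free R-module. -/

import Mathlib

/-!
Let `f : N → P` be a linear map into a free module that has a left inverse `g_r` over each `R_r`,
with the `r` generating the unit ideal. A candidate `q : P → N` has error `e = id - q ∘ f`, and
`e_r ∘ g_r` is the correction that would repair it over `R_r`. Clearing denominators is possible
only at finitely many elements at a time, and a partition of unity then makes `q` a left inverse on
any prescribed finite subset of `N`, without changing `q b_j` for those `j` where `e_r (g_r b_j)`
already vanishes for all `r`. Only finitely many elements of `N`, the numerators of the `g_r b_j`,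
witness this vanishing at `j`, so each `j` involves only finitely many other basis vectors. Finite
corrections can therefore be iterated along a countable set of indices closed under this
dependency, and the closed sets are patched by Zorn's lemma. So `f` splits.
If `f` is the kernel of a surjection from `P` onto a locally projective module, its localizations
split, hence `N` is a direct summand of `P`.
-/

/-- A module `M` over `R` is locally free (for the Zariski topology) if there
are elements `s i` of `R` generating the unit ideal such that each localized
module `M_{s i}` is free over `R_{s i}`. -/
def IsLocallyFreeModule (R M : Type) [CommRing R] [AddCommGroup M] [Module R M] : Prop :=
  ∃ (ι : Type) (s : ι → R), Ideal.span (Set.range s) = ⊤ ∧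
    ∀ i, Module.Free (Localization.Away (s i))
      (LocalizedModule (Submonoid.powers (s i)) M)

section Patching

open Function Module Set

variable {R N P κ : Type*} [CommRing R] [AddCommGroup N] [Module R N] [AddCommGroup P] [Module R P]

/-- A partial left inverse of `f`: the linear map with values `val` on the basis `b` restores the
finitely many elements of `N` attached by `rel` to each index in `domain`. The values of `val`
outside `domain` are provisional, and the order `p ≤ q` forgets them. -/
structure PartialLeftInverse (b : Basis κ R P) (f : N →ₗ[R] P) (rel : κ → Finset N) where
  domain : Set κ
  val : κ → N
  constr_val : ∀ j ∈ domain, ∀ x ∈ rel j, b.constr R val (f x) = x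

/-- Every partial left inverse can be changed outside its domain so that it restores any given
finite set of elements of `N`. This is the only input of the patching argument. -/
def FinitelyCorrectable (b : Basis κ R P) (f : N →ₗ[R] P) (rel : κ → Finset N) : Prop :=
  ∀ (p : PartialLeftInverse b f rel) (F : Finset N),
    ∃ w, EqOn p.val w p.domain ∧ ∀ x ∈ F, b.constr R w (f x) = x

namespace PartialLeftInverse

variable {b : Basis κ R P} {f : N →ₗ[R] P} {rel : κ → Finset N}

instance : Preorder (PartialLeftInverse b f rel) where
  le p q := p.domain ⊆ q.domain ∧ EqOn p.val q.val p.domain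
  le_refl p := ⟨Subset.rfl, eqOn_refl _ _⟩
  le_trans _ _ _ hpq hqr := ⟨hpq.1.trans hqr.1, hpq.2.trans (hqr.2.mono hpq.1)⟩

variable (b f rel) in
open scoped Classical in
/-- The indices of the basis vectors on which the condition imposed by `rel` at `j` depends. -/
noncomputable def relSupport (j : κ) : Finset κ :=
  (rel j).biUnion fun x => (b.repr (f x)).support

variable (b f rel) in
/-- The indices in `U` whose condition depends on basis vectors outside `U`. A set with empty
boundary is closed under dependency; one with finite boundary is closed up to finitely many
conditions. -/
def boundary (U : Set κ) : Set κ :=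
  {j ∈ U | ¬ (relSupport b f rel j : Set κ) ⊆ U}

theorem constr_val_congr {U : Set κ} {v w : κ → N} (h : EqOn v w U) {j : κ}
    (hj : (relSupport b f rel j : Set κ) ⊆ U) {x : N} (hx : x ∈ rel j) :
    b.constr R v (f x) = b.constr R w (f x) := by
  classical
  simp only [b.constr_apply]
  exact Finsupp.sum_congr fun l hl => by rw [h (hj (Finset.mem_biUnion.2 ⟨x, hx, hl⟩))]

theorem exists_eqOn_of_directed {ι : Type*} {p : ι → PartialLeftInverse b f rel}
    (hp : Directed (· ≤ ·) p) : ∃ v, ∀ i, EqOn (p i).val v (p i).domain := by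
  have hval (j : κ) : ∃ n, ∀ i, j ∈ (p i).domain → (p i).val j = n := by
    by_cases hj : ∃ i, j ∈ (p i).domain
    · obtain ⟨i, hi⟩ := hj
      refine ⟨(p i).val j, fun i' hi' => ?_⟩
      obtain ⟨k, hik, hik'⟩ := hp i i'
      rw [hik'.2 hi', hik.2 hi]
    · exact ⟨0, fun i hi => absurd ⟨i, hi⟩ hj⟩
  choose v hv using hval
  exact ⟨v, fun i j hj => hv j i hj⟩

theorem exists_domain_eq_iUnion_of_directed {ι : Type*} [Nonempty ι]
    {p : ι → PartialLeftInverse b f rel} (hp : Directed (· ≤ ·) p)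
    (hclosed : boundary b f rel (⋃ i, (p i).domain) = ∅) :
    ∃ q : PartialLeftInverse b f rel, q.domain = ⋃ i, (p i).domain ∧ ∀ i, p i ≤ q := by
  obtain ⟨v, hv⟩ := exists_eqOn_of_directed hp
  refine ⟨⟨⋃ i, (p i).domain, v, fun j hj x hx => ?_⟩, rfl,
    fun i => ⟨subset_iUnion (fun i => (p i).domain) i, hv i⟩⟩
  have hdom : Directed (· ⊆ ·) fun i => (p i).domain := hp.mono_comp _ fun _ _ h => h.1
  have hsupp : (relSupport b f rel j : Set κ) ⊆ ⋃ i, (p i).domain := by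
    by_contra h
    exact hclosed.subset ⟨hj, h⟩
  obtain ⟨i₁, hi₁⟩ := mem_iUnion.1 hj
  obtain ⟨i₂, hi₂⟩ := hdom.exists_mem_subset_of_finset_subset_biUnion hsupp
  obtain ⟨i, h₁, h₂⟩ := hdom i₁ i₂
  rw [← constr_val_congr (hv i) (hi₂.trans h₂) hx, (p i).constr_val j (h₁ hi₁) x hx]

theorem exists_ge_domain_eq_union (hcorr : FinitelyCorrectable b f rel)
    (p : PartialLeftInverse b f rel) (hp : (boundary b f rel p.domain).Finite)
    {V : Set κ} (hV : V.Finite) : ∃ q, p ≤ q ∧ q.domain = p.domain ∪ V := by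
  classical
  obtain ⟨w, hpw, hw⟩ := hcorr p ((hp.union hV).toFinset.biUnion rel)
  have hw' {j : κ} (hj : j ∈ boundary b f rel p.domain ∪ V) {x : N} (hx : x ∈ rel j) :
      b.constr R w (f x) = x :=
    hw x (Finset.mem_biUnion.2 ⟨j, (hp.union hV).mem_toFinset.2 hj, hx⟩)
  refine ⟨⟨p.domain ∪ V, w, ?_⟩, ⟨subset_union_left, hpw⟩, rfl⟩
  rintro j (hj | hj) x hx
  · by_cases hsupp : (relSupport b f rel j : Set κ) ⊆ p.domain
    · rw [← constr_val_congr hpw hsupp hx, p.constr_val j hj x hx]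
    · exact hw' (.inl ⟨hj, hsupp⟩) hx
  · exact hw' (.inr hj) hx

theorem finite_boundary_union {U V : Set κ} (hU : (boundary b f rel U).Finite) (hV : V.Finite) :
    (boundary b f rel (U ∪ V)).Finite := by
  refine (hU.union hV).subset ?_
  rintro j ⟨hj | hj, hsupp⟩
  · exact .inl ⟨hj, fun h => hsupp (h.trans subset_union_left)⟩
  · exact .inr hj

theorem exists_ge_relSupport_subset (hcorr : FinitelyCorrectable b f rel)
    (p : PartialLeftInverse b f rel) (hp : (boundary b f rel p.domain).Finite) :
    ∃ q, p ≤ q ∧ (boundary b f rel q.domain).Finite ∧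
      ∀ j ∈ p.domain, (relSupport b f rel j : Set κ) ⊆ q.domain := by
  have hV : (⋃ j ∈ boundary b f rel p.domain, (relSupport b f rel j : Set κ)).Finite :=
    hp.biUnion fun j _ => Finset.finite_toSet _
  obtain ⟨q, hpq, hq⟩ := exists_ge_domain_eq_union hcorr p hp hV
  refine ⟨q, hpq, hq ▸ finite_boundary_union hp hV, fun j hj => ?_⟩
  by_cases hsupp : (relSupport b f rel j : Set κ) ⊆ p.domain
  · exact hsupp.trans hpq.1
  · rw [hq]
    exact subset_union_of_subset_right (subset_biUnion_of_mem
      (u := fun j => (relSupport b f rel j : Set κ)) (mem_sep hj hsupp)) _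

theorem exists_ge_boundary_eq_empty (hcorr : FinitelyCorrectable b f rel)
    (p : PartialLeftInverse b f rel) (hp : (boundary b f rel p.domain).Finite) :
    ∃ q, p ≤ q ∧ boundary b f rel q.domain = ∅ := by
  choose next hle hfin hsupp using exists_ge_relSupport_subset hcorr
  let chain (n : ℕ) : {q : PartialLeftInverse b f rel // (boundary b f rel q.domain).Finite} :=
    (fun q => ⟨next q.1 q.2, hfin q.1 q.2⟩)^[n] ⟨p, hp⟩
  have chain_succ (n : ℕ) : (chain (n + 1)).1 = next (chain n).1 (chain n).2 := by
    simp only [chain, iterate_succ_apply']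
  have hmono : Monotone fun n => (chain n).1 :=
    monotone_nat_of_le_succ fun n => chain_succ n ▸ hle _ _
  have hclosed : boundary b f rel (⋃ n, (chain n).1.domain) = ∅ := by
    refine eq_empty_of_forall_notMem fun j ⟨hj, hj'⟩ => hj' ?_
    obtain ⟨n, hn⟩ := mem_iUnion.1 hj
    exact (chain_succ n ▸ hsupp _ (chain n).2 j hn).trans
      (subset_iUnion (fun n => (chain n).1.domain) (n + 1))
  obtain ⟨q, hq, hle⟩ := exists_domain_eq_iUnion_of_directed hmono.directed_le hclosed
  exact ⟨q, hle 0, hq ▸ hclosed⟩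

theorem boundary_iUnion_eq_empty {ι : Type*} {U : ι → Set κ}
    (hU : ∀ i, boundary b f rel (U i) = ∅) : boundary b f rel (⋃ i, U i) = ∅ := by
  refine eq_empty_of_forall_notMem fun j ⟨hj, hsupp⟩ => ?_
  obtain ⟨i, hi⟩ := mem_iUnion.1 hj
  exact (hU i).subset ⟨hi, fun h => hsupp (h.trans (subset_iUnion U i))⟩

theorem exists_domain_eq_univ (hcorr : FinitelyCorrectable b f rel) :
    ∃ p : PartialLeftInverse b f rel, p.domain = univ := by
  let bot : PartialLeftInverse b f rel := ⟨∅, 0, fun j hj => absurd hj (notMem_empty j)⟩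
  obtain ⟨m, -, hm⟩ := zorn_le_nonempty₀
    {p : PartialLeftInverse b f rel | boundary b f rel p.domain = ∅}
    (fun c hc hchain p hp => by
      have : Nonempty c := ⟨⟨p, hp⟩⟩
      have hclosed := boundary_iUnion_eq_empty fun q : c => hc q.2
      obtain ⟨q, hq, hle⟩ := exists_domain_eq_iUnion_of_directed hchain.directed hclosed
      exact ⟨q, (congrArg _ hq).trans hclosed, fun p hp => hle ⟨p, hp⟩⟩)
    bot (sep_empty _)
  have hm_fin : (boundary b f rel m.domain).Finite := hm.1 ▸ finite_empty
  refine ⟨m, eq_univ_of_forall fun j => ?_⟩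
  obtain ⟨q, hmq, hq⟩ := exists_ge_domain_eq_union hcorr m hm_fin (finite_singleton j)
  obtain ⟨q', hqq', hq'⟩ := exists_ge_boundary_eq_empty hcorr q
    (hq ▸ finite_boundary_union hm_fin (finite_singleton j))
  have hjq : j ∈ q.domain := hq ▸ .inr rfl
  exact (hm.2 hq' (hmq.trans hqq')).1 (hqq'.1 hjq)

end PartialLeftInverse

theorem FinitelyCorrectable.exists_leftInverse {b : Basis κ R P} {f : N →ₗ[R] P}
    {rel : κ → Finset N} (hcorr : FinitelyCorrectable b f rel) :
    ∃ g : P →ₗ[R] N, g ∘ₗ f = LinearMap.id := by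
  obtain ⟨p, hp⟩ := PartialLeftInverse.exists_domain_eq_univ hcorr
  refine ⟨b.constr R p.val, LinearMap.ext fun x => ?_⟩
  obtain ⟨w, hw, hfix⟩ := hcorr p {x}
  obtain rfl : p.val = w := by rwa [hp, eqOn_univ] at hw
  exact hfix x (Finset.mem_singleton_self x)

end Patching

section Localization

open Function Module Set

variable {R N P κ : Type*} [CommRing R] [AddCommGroup N] [Module R N] [AddCommGroup P] [Module R P]

theorem exists_smul_lift_on_finset {N' : Type*} [AddCommGroup N'] [Module R N']
    (S : Submonoid R) (φ : N →ₗ[R] N') [IsLocalizedModule S φ] (b : Basis κ R P)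
    (ψ : P →ₗ[R] N') (F : Finset P) :
    ∃ (t : S) (δ : P →ₗ[R] N), (∀ j, ψ (b j) = 0 → δ (b j) = 0) ∧
      ∀ x ∈ F, φ (δ x) = t • ψ x := by
  classical
  let J : Finset κ := F.biUnion fun x => (b.repr x).support
  obtain ⟨t, ht⟩ := IsLocalizedModule.exist_integer_multiples S φ J fun j => ψ (b j)
  have hval (j : κ) : ∃ z, (ψ (b j) = 0 → z = 0) ∧ (j ∈ J → φ z = t • ψ (b j)) := by
    by_cases hψ : ψ (b j) = 0
    · exact ⟨0, fun _ => rfl, fun _ => by rw [hψ, map_zero, smul_zero]⟩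
    by_cases hj : j ∈ J
    · obtain ⟨z, hz⟩ := ht j hj
      exact ⟨z, fun h => absurd h hψ, fun _ => hz⟩
    · exact ⟨0, fun _ => rfl, fun h => absurd h hj⟩
  choose z hz_zero hz using hval
  refine ⟨t, b.constr R z, fun j hj => by rw [b.constr_basis, hz_zero j hj], fun x hx => ?_⟩
  have hxJ : x ∈ Submodule.span R (b '' J) :=
    b.mem_span_image.2 (Finset.subset_biUnion_of_mem (fun x => (b.repr x).support) hx)
  refine LinearMap.eqOn_span (f := φ ∘ₗ b.constr R z) (g := t • ψ) ?_ hxJ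
  rintro _ ⟨j, hj, rfl⟩
  rw [LinearMap.comp_apply, b.constr_basis, hz j hj, LinearMap.smul_apply]

theorem exists_smul_correction {S : Submonoid R} {N' : Type*} [AddCommGroup N'] [Module R N']
    (φ : N →ₗ[R] N') [IsLocalizedModule S φ] (b : Basis κ R P) (f : N →ₗ[R] P) (g : P →ₗ[R] N')
    (hg : g ∘ₗ f = φ) (e : N →ₗ[R] N) (F : Finset N) :
    ∃ (t : S) (δ : P →ₗ[R] N),
      (∀ j, IsLocalizedModule.map S φ φ e (g (b j)) = 0 → δ (b j) = 0) ∧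
        ∀ x ∈ F, δ (f x) = t • e x := by
  classical
  obtain ⟨t, δ, hδ_zero, hδ⟩ := exists_smul_lift_on_finset S φ b
    (IsLocalizedModule.map S φ φ e ∘ₗ g) (F.image f)
  have hδf (x : F) : φ (δ (f x)) = φ (t • e x) := by
    rw [hδ _ (Finset.mem_image_of_mem f x.2), LinearMap.comp_apply, ← LinearMap.comp_apply g f, hg,
      IsLocalizedModule.map_apply, LinearMap.map_smul_of_tower]
  obtain ⟨u, hu⟩ := IsLocalizedModule.exists_of_eq (S := S)
    (f := LinearMap.pi fun i : F => φ ∘ₗ LinearMap.proj i) (funext hδf)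
  refine ⟨u * t, u • δ, fun j hj => ?_, fun x hx => ?_⟩
  · rw [LinearMap.smul_apply, hδ_zero j hj, smul_zero]
  · rw [mul_smul]
    exact congrFun hu ⟨x, hx⟩

theorem finitelyCorrectable_of_span_eq_top {s : Set R} (hs : Ideal.span s = ⊤) (b : Basis κ R P)
    {f : N →ₗ[R] P} (g : ∀ r : s, P →ₗ[R] LocalizedModule (.powers r.1) N)
    (hg : ∀ r, g r ∘ₗ f = LocalizedModule.mkLinearMap (.powers r.1) N) {rel : κ → Finset N}
    (hrel : ∀ (r : s) (j : κ), ∃ x ∈ rel j, ∃ t : Submonoid.powers r.1,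
      LocalizedModule.mkLinearMap (.powers r.1) N x = t • g r (b j)) :
    FinitelyCorrectable b f rel := by
  intro p F
  let e : N →ₗ[R] N := LinearMap.id - b.constr R p.val ∘ₗ f
  let error : (κ → N) →ₗ[R] (F → N) :=
    LinearMap.pi fun x => LinearMap.applyₗ (f x) ∘ₗ (b.constr R).toLinearMap
  have hmem : (fun x : F => e x) ∈ (Submodule.pi p.domain fun _ => ⊥).map error := by
    refine Submodule.mem_of_span_eq_top_of_smul_pow_mem _ s hs _ fun r => ?_
    set φ : N →ₗ[R] _ := LocalizedModule.mkLinearMap (.powers r.1) N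
    have he_loc {j : κ} (hj : j ∈ p.domain) :
        IsLocalizedModule.map (.powers r.1) φ φ e (g r (b j)) = 0 := by
      obtain ⟨x, hx, t, ht⟩ := hrel r j
      have hex : e x = 0 := sub_eq_zero.2 (p.constr_val j hj x hx).symm
      refine (IsLocalizedModule.smul_inj φ t _ _).1 ?_
      rw [← LinearMap.map_smul_of_tower, ← ht, IsLocalizedModule.map_apply, hex, map_zero,
        smul_zero]
    obtain ⟨⟨_, n, rfl⟩, δ, hδ_zero, hδ⟩ :=
      exists_smul_correction (S := .powers r.1) φ b f (g r) (hg r) e F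
    refine ⟨n, fun j => δ (b j), fun j hj => hδ_zero j (he_loc hj), funext fun x => ?_⟩
    calc b.constr R (fun j => δ (b j)) (f x) = δ (f x) := by rw [b.constr_self]
      _ = r.1 ^ n • e x := hδ x x.2
  obtain ⟨v, hv_zero, hv⟩ := hmem
  refine ⟨p.val + v, fun j hj => ?_, fun x hx => ?_⟩
  · rw [Pi.add_apply, (Submodule.mem_bot R).1 (hv_zero j hj), add_zero]
  · have hvx : b.constr R v (f x) = x - b.constr R p.val (f x) := congrFun hv ⟨x, hx⟩
    rw [map_add, LinearMap.add_apply, hvx, add_sub_cancel]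

theorem exists_leftInverse_of_basis_of_span_eq_top {s : Set R} (hs : Ideal.span s = ⊤)
    (b : Basis κ R P) (f : N →ₗ[R] P)
    (hf : ∀ r ∈ s, ∃ g : P →ₗ[R] LocalizedModule (.powers r) N,
      g ∘ₗ f = LocalizedModule.mkLinearMap (.powers r) N) :
    ∃ g : P →ₗ[R] N, g ∘ₗ f = LinearMap.id := by
  classical
  obtain ⟨S, hSs, hS⟩ := (Ideal.span_eq_top_iff_finite s).1 hs
  choose g hg using fun r : (S : Set R) => hf r (hSs r.2)
  have hnum (r : (S : Set R)) (j : κ) := IsLocalizedModule.exists_integer_multiple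
    (.powers r.1) (LocalizedModule.mkLinearMap (.powers r.1) N) (g r (b j))
  choose t x hx using hnum
  exact (finitelyCorrectable_of_span_eq_top hS b g hg
    (rel := fun j => Finset.univ.image fun r => x r j)
    fun r j => ⟨x r j, Finset.mem_image_of_mem _ (Finset.mem_univ r), t r j, hx r j⟩
    ).exists_leftInverse

theorem exists_leftInverse_of_span_eq_top [Module.Projective R P] {s : Set R}
    (hs : Ideal.span s = ⊤) (f : N →ₗ[R] P)
    (hf : ∀ r ∈ s, ∃ g : P →ₗ[R] LocalizedModule (.powers r) N,
      g ∘ₗ f = LocalizedModule.mkLinearMap (.powers r) N) :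
    ∃ g : P →ₗ[R] N, g ∘ₗ f = LinearMap.id := by
  obtain ⟨i, hi⟩ := Module.projective_def'.1 ‹Module.Projective R P›
  obtain ⟨g, hg⟩ := exists_leftInverse_of_basis_of_span_eq_top hs Finsupp.basisSingleOne (i ∘ₗ f)
    fun r hr => by
      obtain ⟨g, hg⟩ := hf r hr
      exact ⟨g ∘ₗ Finsupp.linearCombination R id, by
        rw [LinearMap.comp_assoc, ← LinearMap.comp_assoc f, hi, LinearMap.id_comp, hg]⟩
  exact ⟨g ∘ₗ i, hg⟩

theorem exists_comp_eq_mkLinearMap_of_projective {A : Type*} [AddCommGroup A] [Module R A]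
    {f : N →ₗ[R] P} {g : P →ₗ[R] A} (hf : Injective f) (hg : Surjective g) (hfg : Exact f g)
    (S : Submonoid R) [Module.Projective (Localization S) (LocalizedModule S A)] :
    ∃ l : P →ₗ[R] LocalizedModule S N, l ∘ₗ f = LocalizedModule.mkLinearMap S N := by
  have hexact : Exact (LocalizedModule.map S f) (LocalizedModule.map S g) :=
    LocalizedModule.map_exact S f g hfg
  obtain ⟨σ, hσ⟩ := Module.projective_lifting_property (LocalizedModule.map S g) LinearMap.id
    (LocalizedModule.map_surjective S g hg)
  obtain ⟨-, l, hl⟩ := (hexact.split_tfae'.out 0 1 rfl rfl).1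
    ⟨LocalizedModule.map_injective S f hf, σ, hσ⟩
  refine ⟨l.restrictScalars R ∘ₗ LocalizedModule.mkLinearMap S P, LinearMap.ext fun x => ?_⟩
  simpa using LinearMap.congr_fun hl (LocalizedModule.mkLinearMap S N x)

theorem kernel_is_locally_free_general [Module.Projective R P] {A : Type*} [AddCommGroup A]
    [Module R A] (f : N →ₗ[R] P) (g : P →ₗ[R] A) (hf : Injective f) (hg : Surjective g)
    (hexact : LinearMap.range f = LinearMap.ker g) {s : Set R} (hs : Ideal.span s = ⊤)
    (hA : ∀ r ∈ s, Module.Projective (Localization.Away r) (LocalizedModule (.powers r) A)) :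
    Module.Projective R N := by
  have hfg : Exact f g := LinearMap.exact_iff.2 hexact.symm
  obtain ⟨l, hl⟩ := exists_leftInverse_of_span_eq_top hs f fun r hr =>
    have := hA r hr
    exists_comp_eq_mkLinearMap_of_projective hf hg hfg (.powers r)
  exact Module.Projective.of_split f l hl

end Localization

/-- Let `R` be a commutative ring whose projective modules are all locally free
(e.g. `R` noetherian), `A` a locally free `R`-module and `0 → I → P → A → 0` an
exact sequence of `R`-modules with `P` free. Then `I` is locally free. -/
theorem kernel_is_locally_free {R : Type} [CommRing R]
    (hproj : ∀ (M : Type) [AddCommGroup M] [Module R M],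
      Module.Projective R M → IsLocallyFreeModule R M)
    {I P A : Type} [AddCommGroup I] [Module R I] [AddCommGroup P] [Module R P]
    [AddCommGroup A] [Module R A] [Module.Free R P]
    (f : I →ₗ[R] P) (g : P →ₗ[R] A)
    (hf : Function.Injective f) (hg : Function.Surjective g)
    (hexact : LinearMap.range f = LinearMap.ker g)
    (hA : IsLocallyFreeModule R A) :
    IsLocallyFreeModule R I := by
  obtain ⟨ι, s, hs, hfree⟩ := hA
  exact hproj I (kernel_is_locally_free_general f g hf hg hexact hs
    (Set.forall_mem_range.2 fun i => have := hfree i; inferInstance))
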